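/- Let X and Q be the N×N complex matrices with entries X_{ab} = [e^{i(λ_a−μ_b)}/sin(λ_a−μ_b)]·[∏_{k=1}^{N} sin(μ_b−λ_k)]/[∏_{k≠b} sin(μ_b−μ_k)] and Q_{ab} = [sinh ζ/(sin(μ_a+iζ/2)·sin(μ_a−iζ/2))]·∏_{k=1}^{N} sin(μ_k−iζ/2)/sin(λ_k−iζ/2) (independent of b). Then for all a,b ∈ {1,…,N}: (X·Q)_{ab} = i·( e^{i(λ_a−iζ/2)}/sin(λ_a−iζ/2) − [e^{i(λ_a+iζ/2)}/sin(λ_a+iζ/2)]·∏_{j=1}^{N} [sin(μ_j−iζ/2)·sin(λ_j+iζ/2)]/[sin(μ_j+iζ/2)·sin(λ_j−iζ/2)] ). -/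

import Mathlib

/-!
The `μ`-dependence of `X` and `Q` separates through the partial fraction expansion
`∑ b, R b / sin (μ b - y) = ∏_{k ≠ a} sin (λ k - y) / ∏ k, sin (μ k - y)`, where
`R b = ∏_{k ≠ a} sin (μ b - λ k) / ∏_{k ≠ b} sin (μ b - μ k)` (`sum_div_sin_sub`).
In the variable `exp (2 i y)` this is Lagrange interpolation at the `N` nodes `exp (2 i μ k)` of a
polynomial of degree `N - 1`.

The elementary identity
`e^{-iμ} sinh ζ / (sin (μ + iζ/2) sin (μ - iζ/2))
  = -i (e^{ζ/2} / sin (μ - iζ/2) - e^{-ζ/2} / sin (μ + iζ/2))` (`exp_mul_sinh_div`)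
writes each summand of `(X * Q) a b` as a combination of terms of that expansion at
`y = iζ/2` and `y = -iζ/2`, which produce the two terms of the result.
-/

open Finset

/-- Lagrange interpolation at the nodes `v`, in partial fraction form. -/
lemma eval_div_prod_eq_sum {N : ℕ} (v : Fin N → ℂ) (hv : Function.Injective v)
    (P : Polynomial ℂ) (hP : P.degree < N) (y : ℂ) (hy : ∀ b, y ≠ v b) :
    P.eval y / ∏ k, (y - v k) =
      ∑ b, P.eval (v b) / (∏ k ∈ univ.erase b, (v b - v k)) / (y - v b) := by
  have h := Lagrange.eq_interpolate (s := univ) (v := v) (f := P) hv.injOn (by simpa using hP)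
  have h2 := Lagrange.eval_interpolate_not_at_node (s := univ) (v := v)
    (fun i => P.eval (v i)) (x := y) (fun i _ => hy i)
  rw [← h, Lagrange.eval_nodal] at h2
  have hne : ∏ k, (y - v k) ≠ 0 := prod_ne_zero_iff.2 fun k _ => sub_ne_zero.2 (hy k)
  rw [div_eq_iff hne, h2, mul_comm]
  congr 1
  refine sum_congr rfl fun b _ => ?_
  rw [Lagrange.nodalWeight, prod_inv_distrib]
  simp only [div_eq_mul_inv]
  ring

lemma sin_sub_eq (u v : ℂ) :
    Complex.sin (u - v) = (-Complex.I / 2) *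
      (Complex.exp (Complex.I * u) ^ 2 - Complex.exp (Complex.I * v) ^ 2) *
      ((Complex.exp (Complex.I * u))⁻¹ * (Complex.exp (Complex.I * v))⁻¹) := by
  have hu := Complex.exp_ne_zero (Complex.I * u)
  have hv := Complex.exp_ne_zero (Complex.I * v)
  have h1 : Complex.exp (-(u - v) * Complex.I) =
      Complex.exp (Complex.I * v) * (Complex.exp (Complex.I * u))⁻¹ := by
    rw [← Complex.exp_neg, ← Complex.exp_add]; ring_nf
  have h2 : Complex.exp ((u - v) * Complex.I) =
      Complex.exp (Complex.I * u) * (Complex.exp (Complex.I * v))⁻¹ := by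
    rw [← Complex.exp_neg, ← Complex.exp_add]; ring_nf
  rw [Complex.sin, h1, h2]
  field_simp
  ring

/-- Trigonometric partial fractions with one more sine in the denominator than in the numerator:
every sine is a difference of squares of exponentials, and the prefactors cancel. -/
lemma sum_div_sin_sub {N : ℕ} (l m : Fin N → ℂ) (a : Fin N) (y : ℂ)
    (hm : ∀ b k, b ≠ k → Complex.sin (m b - m k) ≠ 0)
    (hy : ∀ b, Complex.sin (m b - y) ≠ 0) :
    ∑ b, (∏ k ∈ univ.erase a, Complex.sin (m b - l k)) /
        (∏ k ∈ univ.erase b, Complex.sin (m b - m k)) / Complex.sin (m b - y) =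
      (∏ k ∈ univ.erase a, Complex.sin (l k - y)) / ∏ k, Complex.sin (m k - y) := by
  -- In the variables `E z ^ 2` the identity is Lagrange interpolation of the polynomial `P` below.
  set E : ℂ → ℂ := fun z => Complex.exp (Complex.I * z) with hE
  have hE0 : ∀ z, E z ≠ 0 := fun z => Complex.exp_ne_zero _
  have hsin : ∀ u v, Complex.sin (u - v) =
      (-Complex.I / 2) * (E u ^ 2 - E v ^ 2) * ((E u)⁻¹ * (E v)⁻¹) := sin_sub_eq
  have hsin' : ∀ u v, Complex.sin (u - v) =
      (Complex.I / 2) * (E v ^ 2 - E u ^ 2) * ((E u)⁻¹ * (E v)⁻¹) := by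
    intro u v; rw [hsin]; ring
  have hinj : Function.Injective fun b => E (m b) ^ 2 := by
    intro b k hbk
    by_contra hne
    apply hm b k hne
    simp only at hbk
    rw [hsin, hbk]; ring
  have hyne : ∀ b, E y ^ 2 ≠ E (m b) ^ 2 := by
    intro b h
    apply hy b
    rw [hsin, h]; ring
  set P : Polynomial ℂ := ∏ k ∈ univ.erase a, (Polynomial.X - Polynomial.C (E (l k) ^ 2)) with hPdef
  have hcard : ∀ b : Fin N, (univ.erase b).card = N - 1 := by
    intro b; simp [card_erase_of_mem]
  have hN : 0 < N := a.pos
  have hP : P.degree < N := by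
    rw [hPdef, Polynomial.degree_prod]
    simp only [Polynomial.degree_X_sub_C, sum_const, hcard]
    rw [nsmul_one]
    exact_mod_cast Nat.sub_lt hN one_pos
  have hPe : ∀ x, P.eval x = ∏ k ∈ univ.erase a, (x - E (l k) ^ 2) := by
    intro x; simp [hPdef, Polynomial.eval_prod]
  have key := eval_div_prod_eq_sum (fun b => E (m b) ^ 2) hinj P hP (E y ^ 2) hyne
  have hA : ∀ x, ∏ k ∈ univ.erase a, Complex.sin (x - l k) =
      (-Complex.I / 2) ^ (N - 1) * P.eval (E x ^ 2) *
        ((E x)⁻¹ ^ (N - 1) * ∏ k ∈ univ.erase a, (E (l k))⁻¹) := by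
    intro x
    simp only [hsin, prod_mul_distrib, prod_const, hcard, hPe]
  have hA' : ∏ k ∈ univ.erase a, Complex.sin (l k - y) =
      (Complex.I / 2) ^ (N - 1) * P.eval (E y ^ 2) *
        ((∏ k ∈ univ.erase a, (E (l k))⁻¹) * (E y)⁻¹ ^ (N - 1)) := by
    simp only [hsin', prod_mul_distrib, prod_const, hcard, hPe]
  have hB : ∀ b, ∏ k ∈ univ.erase b, Complex.sin (m b - m k) =
      (-Complex.I / 2) ^ (N - 1) * (∏ k ∈ univ.erase b, (E (m b) ^ 2 - E (m k) ^ 2)) *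
        ((E (m b))⁻¹ ^ (N - 1) * ∏ k ∈ univ.erase b, (E (m k))⁻¹) := by
    intro b
    simp only [hsin, prod_mul_distrib, prod_const, hcard]
  have hB' : ∏ k, Complex.sin (m k - y) =
      (Complex.I / 2) ^ N * (∏ k, (E y ^ 2 - E (m k) ^ 2)) *
        ((∏ k, (E (m k))⁻¹) * (E y)⁻¹ ^ N) := by
    simp only [hsin', prod_mul_distrib, prod_const, card_univ, Fintype.card_fin]
  have hpow : ∀ c : ℂ, c ^ N = c ^ (N - 1) * c := fun c => (pow_sub_one_mul hN.ne' c).symm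
  have hI : Complex.I ≠ 0 := Complex.I_ne_zero
  have hprod : ∀ s : Finset (Fin N), ∏ k ∈ s, (E (m k))⁻¹ ≠ 0 :=
    fun s => prod_ne_zero_iff.2 fun k _ => inv_ne_zero (hE0 _)
  have hR : (∏ k ∈ univ.erase a, Complex.sin (l k - y)) / ∏ k, Complex.sin (m k - y) =
      ((∏ k ∈ univ.erase a, (E (l k))⁻¹) / ((∏ k, (E (m k))⁻¹) * (Complex.I / 2) * (E y)⁻¹)) *
        (P.eval (E y ^ 2) / ∏ k, (E y ^ 2 - E (m k) ^ 2)) := by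
    have h1 : (Complex.I / 2) ^ (N - 1) ≠ 0 := pow_ne_zero _ (by simp)
    have h2 : (E y)⁻¹ ^ (N - 1) ≠ 0 := pow_ne_zero _ (inv_ne_zero (hE0 _))
    rw [hA', hB', hpow, hpow (E y)⁻¹]
    generalize (Complex.I / 2) ^ (N - 1) = c at *
    generalize (E y)⁻¹ ^ (N - 1) = d at *
    field_simp
  rw [hR, key, mul_sum]
  refine sum_congr rfl fun b _ => ?_
  have h1 : (-Complex.I / 2) ^ (N - 1) ≠ 0 := pow_ne_zero _ (by simp)
  have h2 : (E (m b))⁻¹ ^ (N - 1) ≠ 0 := pow_ne_zero _ (inv_ne_zero (hE0 _))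
  have h3 := hprod (univ.erase b)
  have h4 := hE0 (m b)
  rw [hA, hB, hsin' (m b) y, ← mul_prod_erase univ (fun k => (E (m k))⁻¹) (mem_univ b)]
  generalize (-Complex.I / 2) ^ (N - 1) = c at *
  generalize (E (m b))⁻¹ ^ (N - 1) = d at *
  generalize ∏ k ∈ univ.erase b, (E (m k))⁻¹ = B at *
  field_simp

lemma sin_add_I_ne_zero (x t : ℝ) (ht : t ≠ 0) : Complex.sin ((x : ℂ) + Complex.I * t) ≠ 0 := by
  rw [Complex.sin_ne_zero_iff]
  intro k h
  have := congrArg Complex.im h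
  simp at this
  exact ht this

lemma sin_sub_ofReal_ne_zero (x y : ℝ) (h : ∀ n : ℤ, x - y ≠ n * Real.pi) :
    Complex.sin ((x : ℂ) - y) ≠ 0 := by
  rw [Complex.sin_ne_zero_iff]
  intro k hk
  exact h k (by exact_mod_cast hk)

/-- The `μ`-dependence of an entry of `Q`, times the factor `e^{-iμ}` coming from `X`, splits into
its simple poles at `± iζ/2`, with coefficients independent of `μ`. -/
lemma exp_mul_sinh_div (x z : ℂ) (hp : Complex.sin (x + Complex.I * z / 2) ≠ 0)
    (hq : Complex.sin (x - Complex.I * z / 2) ≠ 0) :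
    Complex.exp (-(Complex.I * x)) * (Complex.sinh z /
        (Complex.sin (x + Complex.I * z / 2) * Complex.sin (x - Complex.I * z / 2))) =
      -Complex.I * (Complex.exp (z / 2) / Complex.sin (x - Complex.I * z / 2) -
        Complex.exp (-(z / 2)) / Complex.sin (x + Complex.I * z / 2)) := by
  have key : Complex.exp (-(Complex.I * x)) * Complex.sinh z =
      -Complex.I * (Complex.exp (z / 2) * Complex.sin (x + Complex.I * z / 2) -
        Complex.exp (-(z / 2)) * Complex.sin (x - Complex.I * z / 2)) := by
    have e1 : Complex.exp ((x + Complex.I * z / 2) * Complex.I) =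
        Complex.exp (Complex.I * x) * Complex.exp (-(z / 2)) := by
      rw [← Complex.exp_add]; congr 1; linear_combination (z / 2) * Complex.I_sq
    have e2 : Complex.exp (-(x + Complex.I * z / 2) * Complex.I) =
        Complex.exp (-(Complex.I * x)) * Complex.exp (z / 2) := by
      rw [← Complex.exp_add]; congr 1; linear_combination (-z / 2) * Complex.I_sq
    have e3 : Complex.exp ((x - Complex.I * z / 2) * Complex.I) =
        Complex.exp (Complex.I * x) * Complex.exp (z / 2) := by
      rw [← Complex.exp_add]; congr 1; linear_combination (-z / 2) * Complex.I_sq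
    have e4 : Complex.exp (-(x - Complex.I * z / 2) * Complex.I) =
        Complex.exp (-(Complex.I * x)) * Complex.exp (-(z / 2)) := by
      rw [← Complex.exp_add]; congr 1; linear_combination (z / 2) * Complex.I_sq
    have e5 : Complex.exp z = Complex.exp (z / 2) ^ 2 := by
      rw [← Complex.exp_nat_mul]; congr 1; push_cast; ring
    have e6 : Complex.exp (-z) = Complex.exp (-(z / 2)) ^ 2 := by
      rw [← Complex.exp_nat_mul]; congr 1; push_cast; ring
    rw [Complex.sin, Complex.sin, Complex.sinh, e1, e2, e3, e4, e5, e6]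
    linear_combination (Complex.exp (-(Complex.I * x)) / 2 *
      (Complex.exp (z / 2) ^ 2 - Complex.exp (-(z / 2)) ^ 2)) * Complex.I_sq
  rw [← mul_div_assoc, key]
  generalize Complex.sin (x + Complex.I * z / 2) = p at *
  generalize Complex.sin (x - Complex.I * z / 2) = q at *
  field_simp

/-- the entries of the matrix product `X·Q` (equation (2.11)). -/
theorem stmt_5 (N : ℕ) (hN : 0 < N) (ζ : ℝ) (hζ : 0 < ζ)
    (lam mu : Fin N → ℝ)
    (hlam : ∀ a b : Fin N, a ≠ b → ∀ n : ℤ, lam a - lam b ≠ n * Real.pi)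
    (hmu : ∀ a b : Fin N, a ≠ b → ∀ n : ℤ, mu a - mu b ≠ n * Real.pi)
    (hcross : ∀ a b : Fin N, ∀ n : ℤ, lam a - mu b ≠ n * Real.pi)
    (X Q : Matrix (Fin N) (Fin N) ℂ)
    (hX : ∀ a b : Fin N, X a b =
      Complex.exp (Complex.I * ((lam a : ℂ) - (mu b : ℂ))) /
          Complex.sin ((lam a : ℂ) - (mu b : ℂ)) *
        ((∏ k : Fin N, Complex.sin ((mu b : ℂ) - (lam k : ℂ))) /
          ∏ k ∈ univ.erase b, Complex.sin ((mu b : ℂ) - (mu k : ℂ))))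
    (hQ : ∀ a b : Fin N, Q a b =
      Complex.sinh ζ /
          (Complex.sin ((mu a : ℂ) + Complex.I * ζ / 2) *
            Complex.sin ((mu a : ℂ) - Complex.I * ζ / 2)) *
        ∏ k : Fin N,
          Complex.sin ((mu k : ℂ) - Complex.I * ζ / 2) /
            Complex.sin ((lam k : ℂ) - Complex.I * ζ / 2)) :
    ∀ a b : Fin N,
      (X * Q) a b =
        Complex.I *
          (Complex.exp (Complex.I * ((lam a : ℂ) - Complex.I * ζ / 2)) /
              Complex.sin ((lam a : ℂ) - Complex.I * ζ / 2) -
            Complex.exp (Complex.I * ((lam a : ℂ) + Complex.I * ζ / 2)) /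
                Complex.sin ((lam a : ℂ) + Complex.I * ζ / 2) *
              ∏ j : Fin N,
                (Complex.sin ((mu j : ℂ) - Complex.I * ζ / 2) *
                    Complex.sin ((lam j : ℂ) + Complex.I * ζ / 2)) /
                  (Complex.sin ((mu j : ℂ) + Complex.I * ζ / 2) *
                    Complex.sin ((lam j : ℂ) - Complex.I * ζ / 2))) := by
  intro a b
  have hz : ζ / 2 ≠ 0 := by positivity
  have hp : ∀ x : ℝ, Complex.sin ((x : ℂ) + Complex.I * ζ / 2) ≠ 0 := by
    intro x
    have := sin_add_I_ne_zero x (ζ / 2) hz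
    push_cast at this
    rwa [← mul_div_assoc] at this
  have hq : ∀ x : ℝ, Complex.sin ((x : ℂ) - Complex.I * ζ / 2) ≠ 0 := by
    intro x
    have := sin_add_I_ne_zero x (-(ζ / 2)) (neg_ne_zero.2 hz)
    push_cast at this
    rwa [mul_neg, ← sub_eq_add_neg, ← mul_div_assoc] at this
  have hm : ∀ b k : Fin N, b ≠ k → Complex.sin ((mu b : ℂ) - mu k) ≠ 0 :=
    fun b k h => sin_sub_ofReal_ne_zero _ _ (hmu b k h)
  have hS1 := sum_div_sin_sub (fun k => (lam k : ℂ)) (fun k => (mu k : ℂ)) a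
    (Complex.I * ζ / 2) hm (fun k => hq (mu k))
  have hS2 := sum_div_sin_sub (fun k => (lam k : ℂ)) (fun k => (mu k : ℂ)) a
    (-(Complex.I * ζ / 2)) hm (fun k => by rw [sub_neg_eq_add]; exact hp (mu k))
  simp only [sub_neg_eq_add] at hS1 hS2
  set C : ℂ := ∏ k : Fin N, Complex.sin ((mu k : ℂ) - Complex.I * ζ / 2) /
    Complex.sin ((lam k : ℂ) - Complex.I * ζ / 2) with hC
  have hterm : ∀ j, X a j * Q j b = Complex.I * C * Complex.exp (Complex.I * lam a) *
      (Complex.exp ((ζ : ℂ) / 2) *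
        ((∏ k ∈ univ.erase a, Complex.sin ((mu j : ℂ) - lam k)) /
          (∏ k ∈ univ.erase j, Complex.sin ((mu j : ℂ) - mu k)) /
            Complex.sin ((mu j : ℂ) - Complex.I * ζ / 2)) -
       Complex.exp (-((ζ : ℂ) / 2)) *
        ((∏ k ∈ univ.erase a, Complex.sin ((mu j : ℂ) - lam k)) /
          (∏ k ∈ univ.erase j, Complex.sin ((mu j : ℂ) - mu k)) /
            Complex.sin ((mu j : ℂ) + Complex.I * ζ / 2))) := by
    intro j
    have hs : Complex.sin ((lam a : ℂ) - mu j) ≠ 0 := sin_sub_ofReal_ne_zero _ _ (hcross a j)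
    have hs' : Complex.sin ((mu j : ℂ) - lam a) = -Complex.sin ((lam a : ℂ) - mu j) := by
      rw [← Complex.sin_neg, neg_sub]
    have he : Complex.exp (Complex.I * ((lam a : ℂ) - mu j)) =
        Complex.exp (Complex.I * lam a) * Complex.exp (-(Complex.I * mu j)) := by
      rw [← Complex.exp_add]; congr 1; ring
    -- The factor `k = a` of the numerator cancels `sin (lam a - mu j)` up to sign.
    have hX' : X a j = -(Complex.exp (Complex.I * lam a) * Complex.exp (-(Complex.I * mu j))) *
        ((∏ k ∈ univ.erase a, Complex.sin ((mu j : ℂ) - lam k)) /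
          (∏ k ∈ univ.erase j, Complex.sin ((mu j : ℂ) - mu k))) := by
      rw [hX, he, ← mul_prod_erase univ _ (mem_univ a), hs']
      field_simp
    rw [hX', hQ]
    linear_combination (-C * Complex.exp (Complex.I * lam a) *
        ((∏ k ∈ univ.erase a, Complex.sin ((mu j : ℂ) - lam k)) /
          (∏ k ∈ univ.erase j, Complex.sin ((mu j : ℂ) - mu k)))) *
      exp_mul_sinh_div (mu j : ℂ) ζ (hp _) (hq _)
  rw [Matrix.mul_apply, sum_congr rfl fun j _ => hterm j, ← mul_sum, sum_sub_distrib,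
    ← mul_sum, ← mul_sum, hS1, hS2]
  have e1 : Complex.exp (Complex.I * ((lam a : ℂ) - Complex.I * ζ / 2)) =
      Complex.exp (Complex.I * lam a) * Complex.exp ((ζ : ℂ) / 2) := by
    rw [← Complex.exp_add]; congr 1; linear_combination (-(ζ : ℂ) / 2) * Complex.I_sq
  have e2 : Complex.exp (Complex.I * ((lam a : ℂ) + Complex.I * ζ / 2)) =
      Complex.exp (Complex.I * lam a) * Complex.exp (-((ζ : ℂ) / 2)) := by
    rw [← Complex.exp_add]; congr 1; linear_combination ((ζ : ℂ) / 2) * Complex.I_sq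
  have n1 : ∏ k, Complex.sin ((mu k : ℂ) - Complex.I * ζ / 2) ≠ 0 :=
    prod_ne_zero_iff.2 fun k _ => hq _
  have n2 : ∏ k, Complex.sin ((mu k : ℂ) + Complex.I * ζ / 2) ≠ 0 :=
    prod_ne_zero_iff.2 fun k _ => hp _
  have n3 : ∏ k ∈ univ.erase a, Complex.sin ((lam k : ℂ) - Complex.I * ζ / 2) ≠ 0 :=
    prod_ne_zero_iff.2 fun k _ => hq _
  have n4 := hp (lam a)
  have n5 := hq (lam a)
  rw [e1, e2, hC, prod_div_distrib, prod_div_distrib, prod_mul_distrib, prod_mul_distrib,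
    ← mul_prod_erase univ (fun k => Complex.sin ((lam k : ℂ) - Complex.I * ζ / 2)) (mem_univ a),
    ← mul_prod_erase univ (fun k => Complex.sin ((lam k : ℂ) + Complex.I * ζ / 2)) (mem_univ a)]
  generalize Complex.sin ((lam a : ℂ) + Complex.I * ζ / 2) = s at *
  generalize Complex.sin ((lam a : ℂ) - Complex.I * ζ / 2) = s' at *
  generalize ∏ k, Complex.sin ((mu k : ℂ) - Complex.I * ζ / 2) = p1 at *
  generalize ∏ k, Complex.sin ((mu k : ℂ) + Complex.I * ζ / 2) = p2 at *
  generalize ∏ k ∈ univ.erase a, Complex.sin ((lam k : ℂ) - Complex.I * ζ / 2) = p3 at *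
  field_simp
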